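/- arXiv:2402.14234 — 2 statements merged into one kernel-verified Lean document; each statement's English description precedes it below -/
import Mathlib

section
/- Let n be a primitive non-deficient positive integer with prime factorization n = p₁^{a₁} p₂^{a₂} ⋯ p_k^{a_k} where p₁ < p₂ < ⋯ < p_k are primes, and let S = S(n) be its surplus. Then T(n) ≥ log 2 − 25/(64 p₁) + S/2 − S²/4. -/
open Real Finset

/-- `T n` is the sum of the reciprocals of the distinct primes dividing `n`. -/
noncomputable def T (n : ℕ) : ℝ := ∑ p ∈ n.primeFactors, (1 : ℝ) / p

/-- `H n = ∏_{p ∣ n} p/(p-1)` over the distinct prime divisors of `n`. -/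
noncomputable def H (n : ℕ) : ℝ := ∏ p ∈ n.primeFactors, (p : ℝ) / ((p : ℝ) - 1)

/-- `n` is non-deficient if `σ(n)/n ≥ 2`. -/
def NonDeficient (n : ℕ) : Prop := 2 * n ≤ ArithmeticFunction.sigma 1 n

/-- `n` is primitive non-deficient if it is non-deficient and no proper divisor is
non-deficient. -/
def PrimitiveNonDeficient (n : ℕ) : Prop :=
  NonDeficient n ∧ ∀ d : ℕ, d ∣ n → d ≠ n → ¬ NonDeficient d

/-- The error term at a prime. -/
noncomputable def errF (m : ℝ) : ℝ := Real.log (m / (m - 1)) - 1 / m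

lemma errF_le (m : ℝ) (hm : 1 < m) : errF m ≤ 1 / (2 * (m * (m - 1))) := by
  have h0 : 0 < m - 1 := by linarith
  have hy : 0 < m / (m - 1) := by positivity
  have h1 : 0 ≤ Real.log (m / (m - 1)) := by
    apply Real.log_nonneg
    rw [le_div_iff₀ h0]; linarith
  have h2 := Real.self_le_sinh_iff.2 h1
  rw [Real.sinh_log hy] at h2
  unfold errF
  have : (m / (m - 1) - (m / (m - 1))⁻¹) / 2 - 1 / m = 1 / (2 * (m * (m - 1))) := by
    field_simp
    ring
  linarith

lemma errF_series (m : ℝ) (hm : 1 < m) (k : ℕ) :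
    errF m ≤ ∑ i ∈ Finset.range k, (1 / m) ^ (i + 1) / ((i : ℝ) + 1)
      + (1 / m) ^ (k + 1) / (1 - 1 / m) - 1 / m := by
  have h0 : 0 < m := by linarith
  have h00 : 0 < m - 1 := by linarith
  have hx : |1 / m| < 1 := by
    rw [abs_of_pos (by positivity), div_lt_one h0]; exact hm
  have h := Real.abs_log_sub_add_sum_range_le hx k
  rw [abs_of_pos (show 0 < 1 / m by positivity)] at h
  have h1 := (abs_le.1 h).1
  have h2 : Real.log (m / (m - 1)) = - Real.log (1 - 1 / m) := by
    rw [← Real.log_inv]; congr 1; field_simp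
  unfold errF
  rw [h2]; linarith

lemma errF_nonneg (m : ℝ) (hm : 1 < m) : 0 ≤ errF m := by
  have h0 : 0 < m - 1 := by linarith
  have h1 := Real.one_sub_inv_le_log_of_pos (show 0 < m / (m - 1) by positivity)
  have : 1 - (m / (m - 1))⁻¹ = 1 / m := by field_simp; ring
  unfold errF; linarith

lemma tele (q : ℝ) (hq : 5 ≤ q) (N : ℕ) :
    ∑ i ∈ Finset.range N, errF (q + 2 * i) ≤
      1 / (4 * (q - 3 / 2)) - 1 / (4 * (q + 2 * N - 3 / 2)) := by
  induction N with
  | zero => simp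
  | succ N ih =>
    rw [Finset.sum_range_succ]
    have hN : (0 : ℝ) ≤ N := Nat.cast_nonneg N
    have h := errF_le (q + 2 * N) (by linarith)
    push_cast
    set m := q + 2 * (N : ℝ) with hm
    have hm5 : 5 ≤ m := by linarith
    have e : q + 2 * ((N : ℝ) + 1) - 3 / 2 = m + 1 / 2 := by rw [hm]; ring
    rw [e]
    have a1 : 0 < m - 3 / 2 := by linarith
    have a2 : 0 < m + 1 / 2 := by linarith
    have h3 : 1 / (4 * (m - 3 / 2)) - 1 / (4 * (m + 1 / 2)) =
        1 / (2 * ((m - 3 / 2) * (m + 1 / 2))) := by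
      rw [div_sub_div _ _ (by positivity) (by positivity), div_eq_div_iff (by positivity) (by positivity)]
      ring
    have h4 : 1 / (2 * (m * (m - 1))) ≤ 1 / (2 * ((m - 3 / 2) * (m + 1 / 2))) := by
      apply one_div_le_one_div_of_le (by positivity)
      nlinarith
    linarith

lemma tail (A : Finset ℕ) (q : ℕ) (hq : 5 ≤ q) (hodd : Odd q)
    (hA : ∀ m ∈ A, Odd m ∧ q ≤ m) :
    ∑ m ∈ A, errF m ≤ 1 / (4 * ((q : ℝ) - 3 / 2)) := by
  have hq' : (5 : ℝ) ≤ q := by exact_mod_cast hq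
  obtain ⟨N, hN⟩ : ∃ N, ∀ m ∈ A, m < N := ⟨A.sup id + 1, fun m hm =>
    Nat.lt_succ_of_le (Finset.le_sup (f := id) hm)⟩
  have hsub : A ⊆ (Finset.range N).image (fun i => q + 2 * i) := by
    intro m hm
    obtain ⟨h1, h2⟩ := hA m hm
    have h3 := hN m hm
    obtain ⟨a, ha⟩ := h1
    obtain ⟨b, hb⟩ := hodd
    simp only [Finset.mem_image, Finset.mem_range]
    exact ⟨a - b, by omega, by omega⟩
  calc ∑ m ∈ A, errF m ≤ ∑ m ∈ (Finset.range N).image (fun i => q + 2 * i), errF m := by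
        apply Finset.sum_le_sum_of_subset_of_nonneg hsub
        intro i hi _
        simp only [Finset.mem_image, Finset.mem_range] at hi
        obtain ⟨a, -, rfl⟩ := hi
        apply errF_nonneg
        have : (0 : ℝ) ≤ a := Nat.cast_nonneg a
        push_cast; linarith
    _ = ∑ i ∈ Finset.range N, errF ((q : ℝ) + 2 * i) := by
        rw [Finset.sum_image]
        · push_cast; rfl
        · intro a _ b _ h
          simp only at h
          omega
    _ ≤ _ := tele q hq' N
    _ ≤ _ := by
        have : (0 : ℝ) ≤ N := Nat.cast_nonneg N
        have : 0 ≤ 1 / (4 * ((q : ℝ) + 2 * N - 3 / 2)) := by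
          apply div_nonneg <;> linarith
        linarith

lemma small_primes : errF 3 + errF 5 + errF 7 + errF 11 + errF 13 + errF 17 + errF 19
    ≤ 25 / 192 - 1 / 86 := by
  have h3 := errF_series 3 (by norm_num) 8
  have h5 := errF_series 5 (by norm_num) 5
  have h7 := errF_series 7 (by norm_num) 4
  have h11 := errF_series 11 (by norm_num) 4
  have h13 := errF_series 13 (by norm_num) 4
  have h17 := errF_series 17 (by norm_num) 4
  have h19 := errF_series 19 (by norm_num) 4
  norm_num [Finset.sum_range_succ] at h3 h5 h7 h11 h13 h17 h19
  linarith

lemma log_lower_nonneg (u : ℝ) (hu : 0 ≤ u) : u - u ^ 2 / 2 ≤ Real.log (1 + u) := by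
  have h := Real.le_log_one_add_of_nonneg hu
  have : u - u ^ 2 / 2 ≤ 2 * u / (u + 2) := by
    rw [le_div_iff₀ (by linarith)]
    nlinarith [pow_nonneg hu 3]
  linarith

lemma log_lower (u : ℝ) (hu : -(1 / 2) ≤ u) : u - u ^ 2 ≤ Real.log (1 + u) := by
  rcases le_total 0 u with h | h
  · have := log_lower_nonneg u h
    nlinarith [sq_nonneg u]
  · have hd : ∀ x : ℝ, -(1 / 2) ≤ x → HasDerivAt (fun x => Real.log (1 + x) - x + x ^ 2)
        (1 / (1 + x) - 1 + 2 * x) x := by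
      intro x hx
      have h1 : HasDerivAt (fun x : ℝ => 1 + x) 1 x := (hasDerivAt_id x).const_add 1
      have h2 := h1.log (by linarith)
      have h3 := (h2.sub (hasDerivAt_id x)).add (hasDerivAt_pow 2 x)
      have e : (1 / (1 + x) - 1 + 2 * x : ℝ) = 1 / (1 + x) - 1 + ((2 : ℕ) : ℝ) * x ^ (2 - 1) := by
        norm_num
      rw [e]
      exact h3
    have hanti : AntitoneOn (fun x : ℝ => Real.log (1 + x) - x + x ^ 2) (Set.Icc (-(1 / 2)) 0) := by
      apply antitoneOn_of_deriv_nonpos (convex_Icc _ _)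
      · intro x hx
        exact (hd x hx.1).continuousAt.continuousWithinAt
      · intro x hx
        rw [interior_Icc] at hx
        exact (hd x hx.1.le).differentiableAt.differentiableWithinAt
      · intro x hx
        rw [interior_Icc] at hx
        rw [(hd x hx.1.le).deriv]
        have hx1 := hx.1
        have hx2 := hx.2
        have hp : 0 < 1 + x := by linarith
        have : 1 / (1 + x) - 1 + 2 * x = x * (1 + 2 * x) / (1 + x) := by
          field_simp
          ring
        rw [this]
        apply div_nonpos_of_nonpos_of_nonneg _ hp.le
        nlinarith
    have := hanti (a := u) (b := 0) ⟨hu, h⟩ ⟨by norm_num, le_refl _⟩ h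
    simp at this
    linarith

lemma one_add_sum_le (A : Finset ℕ) (g : ℕ → ℝ) (hg : ∀ i ∈ A, 0 ≤ g i) :
    1 + ∑ i ∈ A, g i ≤ ∏ i ∈ A, (1 + g i) ∧ ∑ i ∈ A, g i ^ 2 ≤ (∑ i ∈ A, g i) ^ 2
      ∧ 0 ≤ ∑ i ∈ A, g i := by
  induction A using Finset.induction_on with
  | empty => simp
  | insert a s ha ih =>
    obtain ⟨h1, h2, h3⟩ := ih (fun i hi => hg i (Finset.mem_insert_of_mem hi))
    have h4 := hg a (Finset.mem_insert_self a s)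
    rw [Finset.sum_insert ha, Finset.prod_insert ha, Finset.sum_insert ha]
    refine ⟨?_, ?_, by linarith⟩
    · nlinarith [mul_nonneg h4 h3]
    · nlinarith [mul_nonneg h4 h3]

lemma even_case (A : Finset ℕ) (hA : ∀ p ∈ A, p.Prime) (h2 : 2 ∈ A) (u : ℝ)
    (hu : 2 * (1 + u) = ∏ p ∈ A, (p : ℝ) / ((p : ℝ) - 1)) :
    ∑ p ∈ A, errF p ≤ 25 / 128 + Real.log (1 + u) - u + u ^ 2 := by
  rw [← Finset.mul_prod_erase A _ h2] at hu
  rw [← Finset.add_sum_erase A _ h2]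
  have hp1 : ∀ p ∈ A.erase 2, (1 : ℝ) < p := fun p hp => by
    exact_mod_cast (hA p (Finset.mem_of_mem_erase hp)).one_lt
  have hg : ∀ p ∈ A.erase 2, (0 : ℝ) ≤ 1 / ((p : ℝ) - 1) := fun p hp => by
    have := hp1 p hp
    apply div_nonneg <;> linarith
  obtain ⟨h3, h4, h5⟩ := one_add_sum_le (A.erase 2) (fun p => 1 / ((p : ℝ) - 1)) hg
  have e : ∏ p ∈ A.erase 2, (1 + 1 / ((p : ℝ) - 1)) =
      ∏ p ∈ A.erase 2, (p : ℝ) / ((p : ℝ) - 1) := by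
    apply Finset.prod_congr rfl
    intro p hp
    have : 0 < (p : ℝ) - 1 := by linarith [hp1 p hp]
    field_simp
    ring
  have hu' : 1 + u = ∏ p ∈ A.erase 2, (p : ℝ) / ((p : ℝ) - 1) := by
    have e2 : (((2 : ℕ) : ℝ) / (((2 : ℕ) : ℝ) - 1)) = 2 := by norm_num
    rw [e2] at hu
    linarith
  have h6 : ∑ p ∈ A.erase 2, errF p ≤ ∑ p ∈ A.erase 2, (1 / ((p : ℝ) - 1)) ^ 2 / 2 := by
    apply Finset.sum_le_sum
    intro p hp
    have h := hp1 p hp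
    refine (errF_le p h).trans ?_
    have : 0 < (p : ℝ) - 1 := by linarith
    rw [div_pow, div_div, one_pow]
    apply one_div_le_one_div_of_le (by positivity)
    nlinarith
  rw [← Finset.sum_div] at h6
  have h7 : ∑ p ∈ A.erase 2, 1 / ((p : ℝ) - 1) ≤ u := by linarith
  have h8 : (∑ p ∈ A.erase 2, 1 / ((p : ℝ) - 1)) ^ 2 ≤ u ^ 2 := pow_le_pow_left₀ h5 h7 2
  have h9 := log_lower_nonneg u (by linarith)
  have h10 : errF ((2 : ℕ) : ℝ) ≤ 25 / 128 := by
    unfold errF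
    have := Real.log_two_lt_d9
    norm_num
    linarith
  linarith

lemma odd_case (A : Finset ℕ) (hA : ∀ p ∈ A, p.Prime) (q : ℕ) (hq : q.Prime) (hq2 : q ≠ 2)
    (hle : ∀ p ∈ A, q ≤ p) : ∑ p ∈ A, errF p ≤ 25 / (64 * (q : ℝ)) := by
  have hq3 : 3 ≤ q := by have := hq.two_le; omega
  have hAo : ∀ p ∈ A, Odd p := fun p hp => (hA p hp).odd_of_ne_two (by have := hle p hp; omega)
  rcases Nat.lt_or_ge q 5 with h5 | h5
  · have hq' : q = 3 := by
      interval_cases q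
      · rfl
      · norm_num at hq
    subst hq'
    rw [← Finset.sum_filter_add_sum_filter_not A (fun p => p < 23)]
    have h1 := tail (A.filter (fun p => ¬ p < 23)) 23 (by norm_num) (by decide) (by
      intro m hm
      rw [Finset.mem_filter] at hm
      exact ⟨hAo m hm.1, by omega⟩)
    have h2 : ∑ p ∈ A.filter (fun p => p < 23), errF p ≤
        ∑ p ∈ ({3, 5, 7, 11, 13, 17, 19} : Finset ℕ), errF p := by
      apply Finset.sum_le_sum_of_subset_of_nonneg
      · intro p hp
        rw [Finset.mem_filter] at hp
        have a := hA p hp.1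
        have b := hle p hp.1
        have c := hp.2
        interval_cases p <;> first | decide | (exfalso; revert a; norm_num)
      · intro i hi _
        apply errF_nonneg
        have : 1 < i := by
          simp only [Finset.mem_insert, Finset.mem_singleton] at hi
          omega
        exact_mod_cast this
    have h3 := small_primes
    norm_num at h1 h2 ⊢
    linarith
  · have h5' : (5 : ℝ) ≤ q := by exact_mod_cast h5
    refine (tail A q h5 (hq.odd_of_ne_two hq2) (fun m hm => ⟨hAo m hm, hle m hm⟩)).trans ?_
    rw [div_le_div_iff₀ (by linarith) (by linarith)]
    linarith

theorem stmt_0 (n : ℕ) (hn : 0 < n) (hpnd : PrimitiveNonDeficient n)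
    (S : ℝ) (hS : S = H n - 2) :
    T n ≥ Real.log 2 - 25 / (64 * (n.minFac : ℝ)) + S / 2 - S ^ 2 / 4 := by
  have hpr : ∀ p ∈ n.primeFactors, p.Prime := fun p hp => Nat.prime_of_mem_primeFactors hp
  have hfac : ∀ p ∈ n.primeFactors, 1 ≤ (p : ℝ) / ((p : ℝ) - 1) := by
    intro p hp
    have : (1 : ℝ) < p := by exact_mod_cast (hpr p hp).one_lt
    rw [le_div_iff₀ (by linarith)]; linarith
  have hH1 : 1 ≤ H n := by
    unfold H
    calc (1 : ℝ) = ∏ p ∈ n.primeFactors, (1 : ℝ) := by simp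
      _ ≤ _ := Finset.prod_le_prod (fun _ _ => zero_le_one) hfac
  have hlog : Real.log (H n) = Real.log 2 + Real.log (1 + S / 2) := by
    rw [← Real.log_mul (by norm_num) (by linarith)]
    congr 1; linarith
  have hsum : ∑ p ∈ n.primeFactors, errF p = Real.log (H n) - T n := by
    unfold errF H T
    rw [Finset.sum_sub_distrib, Real.log_prod]
    intro p hp
    have := hfac p hp
    linarith
  have hl := log_lower (S / 2) (by linarith)
  have key : ∑ p ∈ n.primeFactors, errF p ≤
      25 / (64 * (n.minFac : ℝ)) + Real.log (1 + S / 2) - S / 2 + (S / 2) ^ 2 := by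
    rcases eq_or_ne n 1 with h1 | h1
    · subst h1
      simp
      linarith
    have hq := Nat.minFac_prime h1
    by_cases h2 : n.minFac = 2
    · have h3 := even_case n.primeFactors hpr (by
        rw [← h2]; exact Nat.mem_primeFactors.2 ⟨hq, Nat.minFac_dvd n, hn.ne'⟩) (S / 2) (by
        change _ = H n
        linarith)
      rw [h2]
      norm_num at h3 ⊢
      linarith
    · have h3 := odd_case n.primeFactors hpr _ hq h2 (fun p hp =>
        Nat.minFac_le_of_dvd (hpr p hp).two_le (Nat.dvd_of_mem_primeFactors hp))
      linarith
  nlinarith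
end

section
/- Let n be a positive integer of the form n = p₁^{a₁} p₂^{a₂} ⋯ p_k^{a_k} where p₁ < p₂ < ⋯ < p_k are primes with p₁ ≥ 3, and where all exponents a_i are even except for exactly one index j for which a_j is odd. Then H(n)/h(n) ≤ (p_j²/(p_j² − 1)) · ∏_{1 ≤ i ≤ k, i ≠ j} p_i³/(p_i³ − 1). -/
open Real Finset

/-- `h n = σ(n)/n`, the abundancy index of `n`. -/
noncomputable def habund (n : ℕ) : ℝ := (ArithmeticFunction.sigma 1 n : ℝ) / n

lemma factor_eq (p : ℝ) (hp : 1 < p) (a : ℕ) :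
    (p / (p - 1)) / ((∑ i ∈ Finset.range (a + 1), p ^ i) / p ^ a)
      = p ^ (a + 1) / (p ^ (a + 1) - 1) := by
  have h1 : p - 1 ≠ 0 := by linarith
  have h2 : 1 < p ^ (a + 1) := one_lt_pow₀ hp (by omega)
  have h3 : p ^ (a + 1) - 1 ≠ 0 := by linarith
  have h4 : p ^ a ≠ 0 := by positivity
  rw [geom_sum_eq (by linarith)]
  field_simp
  ring

lemma factor_le (p : ℝ) (hp : 1 < p) (a b : ℕ) (hb : b ≠ 0) (hab : b ≤ a) :
    p ^ a / (p ^ a - 1) ≤ p ^ b / (p ^ b - 1) := by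
  have h2 : 1 < p ^ b := one_lt_pow₀ hp hb
  have h3 : p ^ b ≤ p ^ a := pow_le_pow_right₀ hp.le hab
  rw [div_le_div_iff₀ (by linarith) (by linarith)]
  nlinarith

lemma habund_eq (n : ℕ) (hn : 0 < n) : habund n =
    ∏ p ∈ n.primeFactors, ((∑ i ∈ Finset.range (n.factorization p + 1), (p : ℝ) ^ i) /
      (p : ℝ) ^ n.factorization p) := by
  have h1 : (n : ℝ) = ∏ p ∈ n.primeFactors, (p : ℝ) ^ n.factorization p := by
    conv_lhs => rw [← Nat.prod_factorization_pow_eq_self hn.ne']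
    simp [Finsupp.prod]
  rw [Finset.prod_div_distrib, ← h1, habund,
    ArithmeticFunction.sigma_eq_prod_primeFactors_sum_range_factorization_pow_mul hn.ne']
  simp

theorem stmt_12 (n : ℕ) (hn : 0 < n) (hp1 : 3 ≤ n.minFac)
    (j : ℕ) (hj : j ∈ n.primeFactors) (hjodd : Odd (n.factorization j))
    (heven : ∀ p ∈ n.primeFactors, p ≠ j → Even (n.factorization p)) :
    H n / habund n ≤ ((j : ℝ) ^ 2 / ((j : ℝ) ^ 2 - 1)) *
      ∏ p ∈ n.primeFactors.erase j, (p : ℝ) ^ 3 / ((p : ℝ) ^ 3 - 1) := by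
  have hgt : ∀ p ∈ n.primeFactors, (1 : ℝ) < p := fun p hp => by
    exact_mod_cast (Nat.prime_of_mem_primeFactors hp).one_lt
  have hpos : ∀ p ∈ n.primeFactors, 0 < n.factorization p := fun p hp =>
    (Nat.prime_of_mem_primeFactors hp).factorization_pos_of_dvd hn.ne'
      (Nat.dvd_of_mem_primeFactors hp)
  have hnn : ∀ p ∈ n.primeFactors, ∀ a : ℕ, 0 ≤ (p : ℝ) ^ a / ((p : ℝ) ^ a - 1) := fun p hp a =>
    div_nonneg (by positivity) (by linarith [one_le_pow₀ (hgt p hp).le (n := a)])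
  rw [habund_eq n hn, H, ← Finset.prod_div_distrib,
    Finset.prod_congr rfl (fun (p : ℕ) hp => factor_eq (p : ℝ) (hgt p hp) (n.factorization p)),
    ← Finset.mul_prod_erase _ _ hj]
  refine mul_le_mul ?_ ?_ ?_ (hnn j hj 2)
  · exact factor_le _ (hgt j hj) _ _ (by norm_num) (by have := hpos j hj; omega)
  · refine Finset.prod_le_prod (fun p hp => hnn p (Finset.mem_of_mem_erase hp) _) fun p hp => ?_
    have hp' := Finset.mem_of_mem_erase hp
    refine factor_le _ (hgt p hp') _ _ (by norm_num) ?_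
    obtain ⟨k, hk⟩ := heven p hp' (Finset.ne_of_mem_erase hp)
    have := hpos p hp'
    omega
  · exact Finset.prod_nonneg fun p hp => hnn p (Finset.mem_of_mem_erase hp) _
end
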